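/- arXiv:cs/0510029 — 2 statements merged into one kernel-verified Lean document; each statement's English description precedes it below -/
import Mathlib

section
/- If the joint probability matrix of a pair of random variables α, β on a finite probability space is a block matrix, then α and β are not conditionally independent of any order k. -/
open scoped BigOperators Classical

noncomputable section

/-- Probability of an event `E` under a distribution `μ` on a finite sample space `Ω`. -/
def pr {Ω : Type} [Fintype Ω] (μ : Ω → ℝ) (E : Ω → Prop) : ℝ :=
  ∑ ω, if E ω then μ ω else 0

/-- `μ` is a probability distribution on the finite space `Ω`. -/
def IsProb {Ω : Type} [Fintype Ω] (μ : Ω → ℝ) : Prop :=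
  (∀ ω, 0 ≤ μ ω) ∧ ∑ ω, μ ω = 1

/-- Shannon entropy (base 2) of a random variable `α` on a finite probability space. -/
def ent {Ω A : Type} [Fintype Ω] (μ : Ω → ℝ) (α : Ω → A) : ℝ :=
  -∑ a ∈ Finset.univ.image α,
      pr μ (fun ω => α ω = a) * Real.logb 2 (pr μ (fun ω => α ω = a))

/-- Conditional entropy `H(α | β)`. -/
def condEnt {Ω A B : Type} [Fintype Ω] (μ : Ω → ℝ) (α : Ω → A) (β : Ω → B) : ℝ :=
  ent μ (fun ω => (α ω, β ω)) - ent μ β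

/-- Mutual information `I(α : β)`. -/
def mutualInfo {Ω A B : Type} [Fintype Ω] (μ : Ω → ℝ) (α : Ω → A) (β : Ω → B) : ℝ :=
  ent μ α + ent μ β - ent μ (fun ω => (α ω, β ω))

/-- Conditional mutual information `I(α : β | γ)`. -/
def condMutualInfo {Ω A B C : Type} [Fintype Ω] (μ : Ω → ℝ)
    (α : Ω → A) (β : Ω → B) (γ : Ω → C) : ℝ :=
  condEnt μ α γ + condEnt μ β γ - condEnt μ (fun ω => (α ω, β ω)) γ

/-- Independence of two random variables. -/
def Indep {Ω A B : Type} [Fintype Ω] (μ : Ω → ℝ) (α : Ω → A) (β : Ω → B) : Prop :=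
  ∀ (a : A) (b : B),
    pr μ (fun ω => α ω = a ∧ β ω = b) =
      pr μ (fun ω => α ω = a) * pr μ (fun ω => β ω = b)

/-- Auxiliary form of "conditionally independent of order `k`" (explicit `Fintype`):
`α` and `β` are conditionally independent of order `0` if they are independent,
and of order `k + 1` if on some finite probability space there are random variables
`α₀, β₀, α*, β*` such that `(α₀, β₀)` has the same joint distribution as `(α, β)`,
`I(α₀ : β₀ | α*) = 0`, `I(α₀ : β₀ | β*) = 0`, and `α*, β*` are conditionally
independent of order `k`. -/
def CondIndepOrderAux : ℕ → (Ω A B : Type) → Fintype Ω → (Ω → ℝ) → (Ω → A) → (Ω → B) → Prop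
  | 0, _Ω, _A, _B, iΩ, μ, α, β => @Indep _ _ _ iΩ μ α β
  | k+1, _Ω, A, B, iΩ, μ, α, β =>
      ∃ (Ω' A' B' : Type) (iΩ' : Fintype Ω') (μ' : Ω' → ℝ)
        (α₀ : Ω' → A) (β₀ : Ω' → B) (αs : Ω' → A') (βs : Ω' → B'),
        @IsProb _ iΩ' μ' ∧
        (∀ (a : A) (b : B),
          @pr _ iΩ' μ' (fun ω => α₀ ω = a ∧ β₀ ω = b) =
            @pr _ iΩ μ (fun ω => α ω = a ∧ β ω = b)) ∧
        @condMutualInfo _ _ _ _ iΩ' μ' α₀ β₀ αs = 0 ∧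
        @condMutualInfo _ _ _ _ iΩ' μ' α₀ β₀ βs = 0 ∧
        CondIndepOrderAux k Ω' A' B' iΩ' μ' αs βs

/-- Random variables `α` and `β` on a finite probability space are
conditionally independent of order `k`. -/
def CondIndepOrder {Ω A B : Type} [iΩ : Fintype Ω]
    (μ : Ω → ℝ) (α : Ω → A) (β : Ω → B) (k : ℕ) : Prop :=
  CondIndepOrderAux k Ω A B iΩ μ α β

/-- An `m × n` joint probability matrix: nonnegative entries summing to `1`. -/
def IsJointProbMatrix {m n : ℕ} (M : Matrix (Fin m) (Fin n) ℝ) : Prop :=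
  (∀ i j, 0 ≤ M i j) ∧ ∑ i, ∑ j, M i j = 1

/-- `M` is the joint probability matrix of the pair `(α, β)`. -/
def IsJointMatrixOf {Ω : Type} [Fintype Ω] {m n : ℕ} (M : Matrix (Fin m) (Fin n) ℝ)
    (μ : Ω → ℝ) (α : Ω → Fin m) (β : Ω → Fin n) : Prop :=
  ∀ i j, M i j = pr μ (fun ω => α ω = i ∧ β ω = j)

/-- `M` is a block matrix: rows and columns can be partitioned into two nonempty
parts so that the two diagonal blocks each contain a nonzero element and all
entries outside the diagonal blocks vanish. -/
def IsBlockMatrix {m n : ℕ} (M : Matrix (Fin m) (Fin n) ℝ) : Prop :=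
  ∃ (I₁ : Finset (Fin m)) (J₁ : Finset (Fin n)),
    I₁.Nonempty ∧ I₁ᶜ.Nonempty ∧ J₁.Nonempty ∧ J₁ᶜ.Nonempty ∧
    (∃ i ∈ I₁, ∃ j ∈ J₁, M i j ≠ 0) ∧
    (∃ i ∈ I₁ᶜ, ∃ j ∈ J₁ᶜ, M i j ≠ 0) ∧
    (∀ i j, ((i ∈ I₁ ∧ j ∈ J₁ᶜ) ∨ (i ∈ I₁ᶜ ∧ j ∈ J₁)) → M i j = 0)

/-- `M` is a good matrix: the joint probability matrix of some pair of
conditionally independent random variables (of some finite order). -/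
def IsGoodMatrix {m n : ℕ} (M : Matrix (Fin m) (Fin n) ℝ) : Prop :=
  ∃ (Ω : Type) (iΩ : Fintype Ω) (μ : Ω → ℝ) (α : Ω → Fin m) (β : Ω → Fin n) (k : ℕ),
    @IsProb _ iΩ μ ∧ @IsJointMatrixOf _ iΩ _ _ M μ α β ∧
    @CondIndepOrder _ _ _ iΩ μ α β k

/-- A stochastic matrix: nonnegative entries, all row sums equal to `1`. -/
def IsStochastic {m n : ℕ} (A : Matrix (Fin m) (Fin n) ℝ) : Prop :=
  (∀ i j, 0 ≤ A i j) ∧ ∀ i, ∑ j, A i j = 1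

/-- The matrix `D_ε`: diagonal entries `1/2 - ε`, off-diagonal entries `ε`. -/
def Dmat (ε : ℝ) : Matrix (Fin 2) (Fin 2) ℝ :=
  fun i j => if i = j then 1/2 - ε else ε

/-- The distribution of `n` i.i.d. trials, each distributed according to `μ`. -/
def iidMeasure {Ω : Type} [Fintype Ω] (μ : Ω → ℝ) (n : ℕ) : (Fin n → Ω) → ℝ :=
  fun ωv => ∏ i, μ (ωv i)

/-- The sequence of `n` coordinatewise copies of a random variable. -/
def iidRV {Ω A : Type} (α : Ω → A) (n : ℕ) : (Fin n → Ω) → (Fin n → A) :=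
  fun ωv i => α (ωv i)

/-- `(u, v, w)` belongs to the rate region of the pair `(α, β)`. -/
def InRateRegion {Ω A B : Type} [Fintype Ω] (μ : Ω → ℝ) (α : Ω → A) (β : Ω → B)
    (u v w : ℝ) : Prop :=
  0 ≤ u ∧ 0 ≤ v ∧ 0 ≤ w ∧
  ∀ ε > (0:ℝ), ∀ δ > (0:ℝ), ∃ n₀ : ℕ, ∀ n ≥ n₀,
    ∃ (t : (Fin n → A) × (Fin n → B) → (Fin ⌊(u + δ) * n⌋₊ → Bool))
      (f : (Fin n → A) × (Fin n → B) → (Fin ⌊(v + δ) * n⌋₊ → Bool))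
      (g : (Fin n → A) × (Fin n → B) → (Fin ⌊(w + δ) * n⌋₊ → Bool))
      (r : (Fin ⌊(u + δ) * n⌋₊ → Bool) × (Fin ⌊(v + δ) * n⌋₊ → Bool) → (Fin n → A))
      (s : (Fin ⌊(u + δ) * n⌋₊ → Bool) × (Fin ⌊(w + δ) * n⌋₊ → Bool) → (Fin n → B)),
      pr (iidMeasure μ n) (fun ωv =>
          r (t (iidRV α n ωv, iidRV β n ωv), f (iidRV α n ωv, iidRV β n ωv)) = iidRV α n ωv)
        > 1 - ε ∧
      pr (iidMeasure μ n) (fun ωv =>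
          s (t (iidRV α n ωv, iidRV β n ωv), g (iidRV α n ωv, iidRV β n ωv)) = iidRV β n ωv)
        > 1 - ε

/-- The support of a matrix: the set of positions of its nonzero entries. -/
def msupport {m n : ℕ} (M : Matrix (Fin m) (Fin n) ℝ) : Set (Fin m × Fin n) :=
  {p | M p.1 p.2 ≠ 0}

/-- An r-matrix: nonnegative entries and rectangular support. -/
def IsRMatrix {m n : ℕ} (M : Matrix (Fin m) (Fin n) ℝ) : Prop :=
  (∀ i j, 0 ≤ M i j) ∧ ∃ (A : Set (Fin m)) (B : Set (Fin n)), msupport M = A ×ˢ B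

/-- An r-decomposition of `M`: an expression of `M` as a finite sum of r-matrices
such that the supports of consecutive summands intersect. -/
def IsRDecomposition {m n : ℕ} (M : Matrix (Fin m) (Fin n) ℝ)
    (l : ℕ) (Ms : Fin l → Matrix (Fin m) (Fin n) ℝ) : Prop :=
  M = ∑ i, Ms i ∧ (∀ i, IsRMatrix (Ms i)) ∧
  ∀ (i : ℕ) (h : i + 1 < l),
    (msupport (Ms ⟨i, Nat.lt_of_succ_lt h⟩) ∩ msupport (Ms ⟨i + 1, h⟩)).Nonempty

end

/-!
Call an event a common bit of `α` and `β` if it is almost surely a function of `α`, almost surely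
a function of `β`, and neither it nor its complement is null. A block structure of the joint
matrix is a common bit: the event that `α` falls in the first block. Independent variables have no
common bit, since every combination of their possible values is possible. If `I(α : β | γ) = 0`,
then given `γ` every combination of the possible values of `α` and `β` is possible, so a common
bit of `α` and `β` is constant given `γ`, i.e. a function of `γ`. Hence a common bit of `(α, β)`
passes to `(α*, β*)`, and by induction on the order it would reach an independent pair.
-/

section Probability

variable {Ω A B : Type} [Fintype Ω] {μ : Ω → ℝ}

lemma pr_nonneg (hμ : ∀ ω, 0 ≤ μ ω) (E : Ω → Prop) : 0 ≤ pr μ E :=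
  Finset.sum_nonneg fun ω _ => ite_nonneg (hμ ω) le_rfl

lemma pr_ne_zero_iff (hμ : ∀ ω, 0 ≤ μ ω) {E : Ω → Prop} :
    pr μ E ≠ 0 ↔ ∃ ω, 0 < μ ω ∧ E ω := by
  have hterm : ∀ ω, 0 ≤ if E ω then μ ω else 0 := fun ω => ite_nonneg (hμ ω) le_rfl
  simp only [pr, ne_eq, Finset.sum_eq_zero_iff_of_nonneg fun ω _ => hterm ω, Finset.mem_univ,
    true_implies, not_forall, ite_eq_right_iff, exists_prop, (hμ _).lt_iff_ne', and_comm]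

/-- The probability mass function of a random variable `X` under the weights `μ`. -/
noncomputable def law (μ : Ω → ℝ) (X : Ω → A) (a : A) : ℝ :=
  pr μ fun ω => X ω = a

lemma law_nonneg (hμ : ∀ ω, 0 ≤ μ ω) (X : Ω → A) (a : A) : 0 ≤ law μ X a :=
  pr_nonneg hμ _

lemma law_ne_zero_iff (hμ : ∀ ω, 0 ≤ μ ω) {X : Ω → A} {a : A} :
    law μ X a ≠ 0 ↔ ∃ ω, 0 < μ ω ∧ X ω = a :=
  pr_ne_zero_iff hμ

lemma sum_law_mul {X : Ω → A} {s : Finset A} (hs : ∀ ω, X ω ∈ s) (f : A → ℝ) :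
    ∑ a ∈ s, law μ X a * f a = ∑ ω, μ ω * f (X ω) := by
  simp only [law, pr, Finset.sum_mul, ite_mul, zero_mul]
  rw [Finset.sum_comm]
  simp only [Finset.sum_ite_eq, hs, if_true]

lemma sum_law {X : Ω → A} {s : Finset A} (hs : ∀ ω, X ω ∈ s) :
    ∑ a ∈ s, law μ X a = ∑ ω, μ ω := by
  simpa only [mul_one] using sum_law_mul (μ := μ) hs fun _ => 1

lemma sum_law_prodMk {X : Ω → A} {s : Finset A} (hs : ∀ ω, X ω ∈ s) (Y : Ω → B) (b : B) :
    ∑ a ∈ s, law μ (fun ω => (X ω, Y ω)) (a, b) = law μ Y b := by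
  simp only [law, pr, Prod.mk.injEq, ite_and]
  rw [Finset.sum_comm]
  simp only [Finset.sum_ite_eq, hs, if_true]

end Probability

section ConditionalMutualInformation

open InformationTheory Real

lemma eq_of_sum_mul_log_div_nonpos {ι : Type*} {s : Finset ι} {p q : ι → ℝ}
    (hp : ∀ i ∈ s, 0 ≤ p i) (hq : ∀ i ∈ s, 0 ≤ q i) (hpq : ∀ i ∈ s, q i = 0 → p i = 0)
    (hsum : ∑ i ∈ s, q i ≤ ∑ i ∈ s, p i) (hlog : ∑ i ∈ s, p i * log (p i / q i) ≤ 0) :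
    ∀ i ∈ s, p i = q i := by
  have hkl : ∀ i ∈ s, q i * klFun (p i / q i) = p i * log (p i / q i) + (q i - p i) := by
    intro i hi
    rcases eq_or_ne (q i) 0 with h0 | h0
    · simp [h0, hpq i hi h0]
    · rw [klFun]
      field_simp
      ring
  have hterm : ∀ i ∈ s, 0 ≤ q i * klFun (p i / q i) := fun i hi =>
    mul_nonneg (hq i hi) (klFun_nonneg (div_nonneg (hp i hi) (hq i hi)))
  have hzero : ∑ i ∈ s, q i * klFun (p i / q i) = 0 := by
    refine le_antisymm ?_ (Finset.sum_nonneg hterm)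
    rw [Finset.sum_congr rfl hkl, Finset.sum_add_distrib, Finset.sum_sub_distrib]
    linarith
  intro i hi
  rcases mul_eq_zero.1 ((Finset.sum_eq_zero_iff_of_nonneg hterm).1 hzero i hi) with h0 | hdiv
  · rw [h0, hpq i hi h0]
  · exact eq_of_div_eq_one ((klFun_eq_zero_iff (div_nonneg (hp i hi) (hq i hi))).1 hdiv)

variable {Ω A B C : Type} [Fintype Ω] {μ : Ω → ℝ} {α : Ω → A} {β : Ω → B} {γ : Ω → C}

lemma ent_eq_neg_sum (μ : Ω → ℝ) (X : Ω → A) :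
    ent μ X = -∑ ω, μ ω * logb 2 (law μ X (X ω)) :=
  congrArg Neg.neg <|
    sum_law_mul (fun ω => Finset.mem_image_of_mem X (Finset.mem_univ ω)) fun a => logb 2 (law μ X a)

/-- The joint law that `((α, β), γ)` would have if `α` and `β` were conditionally independent given
`γ`, with unchanged laws of `(α, γ)` and `(β, γ)`. Where `γ` has probability zero the division
makes it `0`, which is the correct value. -/
noncomputable def condProdLaw (μ : Ω → ℝ) (α : Ω → A) (β : Ω → B) (γ : Ω → C)
    (t : (A × B) × C) : ℝ :=
  law μ (fun ω => (α ω, γ ω)) (t.1.1, t.2) * law μ (fun ω => (β ω, γ ω)) (t.1.2, t.2) / law μ γ t.2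

lemma condProdLaw_nonneg (hμ : ∀ ω, 0 ≤ μ ω) (t : (A × B) × C) : 0 ≤ condProdLaw μ α β γ t :=
  div_nonneg (mul_nonneg (law_nonneg hμ _ _) (law_nonneg hμ _ _)) (law_nonneg hμ _ _)

lemma condProdLaw_ne_zero (hμ : ∀ ω, 0 ≤ μ ω) {u v : Ω} (hu : 0 < μ u) (hv : 0 < μ v)
    (huv : γ u = γ v) : condProdLaw μ α β γ ((α u, β v), γ v) ≠ 0 :=
  div_ne_zero
    (mul_ne_zero ((law_ne_zero_iff hμ).2 ⟨u, hu, by rw [huv]⟩)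
      ((law_ne_zero_iff hμ).2 ⟨v, hv, rfl⟩))
    ((law_ne_zero_iff hμ).2 ⟨v, hv, rfl⟩)

lemma law_eq_zero_of_condProdLaw_eq_zero (hμ : ∀ ω, 0 ≤ μ ω) {t : (A × B) × C}
    (ht : condProdLaw μ α β γ t = 0) : law μ (fun ω => ((α ω, β ω), γ ω)) t = 0 := by
  contrapose! ht
  obtain ⟨ω, hω, rfl⟩ := (law_ne_zero_iff hμ).1 ht
  exact condProdLaw_ne_zero hμ hω hω rfl

lemma sum_condProdLaw {s : Finset A} {t : Finset B} {r : Finset C}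
    (hs : ∀ ω, α ω ∈ s) (ht : ∀ ω, β ω ∈ t) (hr : ∀ ω, γ ω ∈ r) :
    ∑ i ∈ (s ×ˢ t) ×ˢ r, condProdLaw μ α β γ i = ∑ ω, μ ω := by
  calc ∑ i ∈ (s ×ˢ t) ×ˢ r, condProdLaw μ α β γ i
      = ∑ c ∈ r, (∑ a ∈ s, law μ (fun ω => (α ω, γ ω)) (a, c)) *
          (∑ b ∈ t, law μ (fun ω => (β ω, γ ω)) (b, c)) / law μ γ c := by
        simp only [condProdLaw, Finset.sum_product_right, ← Finset.sum_div, Finset.sum_mul_sum]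
        refine Finset.sum_congr rfl fun c _ => ?_
        rw [Finset.sum_comm]
    _ = ∑ c ∈ r, law μ γ c := by
        simp only [sum_law_prodMk hs, sum_law_prodMk ht, mul_self_div_self]
    _ = ∑ ω, μ ω := sum_law hr

lemma condMutualInfo_mul_log_two (hμ : ∀ ω, 0 ≤ μ ω) :
    condMutualInfo μ α β γ * log 2 =
      ∑ ω, μ ω * log (law μ (fun ω => ((α ω, β ω), γ ω)) ((α ω, β ω), γ ω) /
        condProdLaw μ α β γ ((α ω, β ω), γ ω)) := by
  have hterm : ∀ ω, μ ω * log (law μ (fun ω => ((α ω, β ω), γ ω)) ((α ω, β ω), γ ω) /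
      condProdLaw μ α β γ ((α ω, β ω), γ ω)) =
      (μ ω * logb 2 (law μ (fun ω => ((α ω, β ω), γ ω)) ((α ω, β ω), γ ω)) +
        μ ω * logb 2 (law μ γ (γ ω)) -
        μ ω * logb 2 (law μ (fun ω => (α ω, γ ω)) (α ω, γ ω)) -
        μ ω * logb 2 (law μ (fun ω => (β ω, γ ω)) (β ω, γ ω))) * log 2 := by
    intro ω
    rcases (hμ ω).eq_or_lt with h0 | hω
    · simp [← h0]
    · have hlaw : ∀ {D : Type} (X : Ω → D), law μ X (X ω) ≠ 0 := fun X =>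
        (law_ne_zero_iff hμ).2 ⟨ω, hω, rfl⟩
      have hlog : log 2 ≠ 0 := (log_pos one_lt_two).ne'
      have hαγ := hlaw fun ω => (α ω, γ ω)
      have hβγ := hlaw fun ω => (β ω, γ ω)
      rw [log_div (hlaw _) (condProdLaw_ne_zero hμ hω hω rfl), condProdLaw,
        log_div (mul_ne_zero hαγ hβγ) (hlaw γ), log_mul hαγ hβγ]
      simp only [logb]
      field_simp
      ring
  rw [Finset.sum_congr rfl fun ω _ => hterm ω, ← Finset.sum_mul]
  simp only [condMutualInfo, condEnt, ent_eq_neg_sum, Finset.sum_sub_distrib,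
    Finset.sum_add_distrib]
  ring

lemma law_eq_condProdLaw_of_condMutualInfo_eq_zero (hμ : ∀ ω, 0 ≤ μ ω)
    (hI : condMutualInfo μ α β γ = 0) (t : (A × B) × C) :
    law μ (fun ω => ((α ω, β ω), γ ω)) t = condProdLaw μ α β γ t := by
  let sA := insert t.1.1 (Finset.univ.image α)
  let sB := insert t.1.2 (Finset.univ.image β)
  let sC := insert t.2 (Finset.univ.image γ)
  have hα : ∀ ω, α ω ∈ sA := by simp [sA]
  have hβ : ∀ ω, β ω ∈ sB := by simp [sB]
  have hγ : ∀ ω, γ ω ∈ sC := by simp [sC]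
  have hαβγ : ∀ ω, ((α ω, β ω), γ ω) ∈ (sA ×ˢ sB) ×ˢ sC := by simp [hα, hβ, hγ]
  have ht : t ∈ (sA ×ˢ sB) ×ˢ sC := by simp [sA, sB, sC]
  refine eq_of_sum_mul_log_div_nonpos (p := law μ fun ω => ((α ω, β ω), γ ω))
    (fun _ _ => law_nonneg hμ _ _) (fun _ _ => condProdLaw_nonneg hμ _)
    (fun _ _ => law_eq_zero_of_condProdLaw_eq_zero hμ) ?_ ?_ t ht
  · rw [sum_condProdLaw hα hβ hγ, sum_law hαβγ]
  · rw [sum_law_mul hαβγ fun i =>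
        log (law μ (fun ω => ((α ω, β ω), γ ω)) i / condProdLaw μ α β γ i),
      ← condMutualInfo_mul_log_two hμ, hI, zero_mul]

end ConditionalMutualInformation

section CommonBit

variable {Ω A B C : Type} [Fintype Ω] {μ : Ω → ℝ} {α : Ω → A} {β : Ω → B}

lemma exists_pos_of_indep (hμ : ∀ ω, 0 ≤ μ ω) (h : Indep μ α β) {u v : Ω}
    (hu : 0 < μ u) (hv : 0 < μ v) : ∃ ω, 0 < μ ω ∧ α ω = α u ∧ β ω = β v := by
  rw [← pr_ne_zero_iff hμ, h]
  exact mul_ne_zero ((pr_ne_zero_iff hμ).2 ⟨u, hu, rfl⟩) ((pr_ne_zero_iff hμ).2 ⟨v, hv, rfl⟩)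

lemma exists_pos_of_condMutualInfo_eq_zero (hμ : ∀ ω, 0 ≤ μ ω) {γ : Ω → C}
    (hI : condMutualInfo μ α β γ = 0) {u v : Ω} (hu : 0 < μ u) (hv : 0 < μ v)
    (huv : γ u = γ v) : ∃ ω, 0 < μ ω ∧ α ω = α u ∧ β ω = β v := by
  have hlaw := condProdLaw_ne_zero (α := α) (β := β) hμ hu hv huv
  rw [← law_eq_condProdLaw_of_condMutualInfo_eq_zero hμ hI, law_ne_zero_iff hμ] at hlaw
  obtain ⟨ω, hω, heq⟩ := hlaw
  simp only [Prod.mk.injEq] at heq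
  exact ⟨ω, hω, heq.1⟩

/-- The random variable `X` almost surely determines whether the event `E` occurs. -/
def Determines {Ω A : Type} (μ : Ω → ℝ) (X : Ω → A) (E : Ω → Prop) : Prop :=
  ∀ ⦃u v⦄, 0 < μ u → 0 < μ v → X u = X v → (E u ↔ E v)

/-- `α` and `β` have a common bit: an event that is neither null nor almost sure and whose
occurrence can be read off from either variable. This is nontriviality of the Gács–Körner common
information. -/
def HasCommonBit {Ω A B : Type} (μ : Ω → ℝ) (α : Ω → A) (β : Ω → B) : Prop :=
  ∃ E : Ω → Prop, Determines μ α E ∧ Determines μ β E ∧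
    (∃ ω, 0 < μ ω ∧ E ω) ∧ ∃ ω, 0 < μ ω ∧ ¬E ω

lemma Determines.of_condMutualInfo_eq_zero (hμ : ∀ ω, 0 ≤ μ ω) {γ : Ω → C} {E : Ω → Prop}
    (hα : Determines μ α E) (hβ : Determines μ β E) (hI : condMutualInfo μ α β γ = 0) :
    Determines μ γ E := by
  intro u v hu hv huv
  obtain ⟨ω, hω, hαω, hβω⟩ := exists_pos_of_condMutualInfo_eq_zero hμ hI hu hv huv
  exact (hα hu hω hαω.symm).trans (hβ hω hv hβω)

namespace HasCommonBit

lemma not_indep (hμ : ∀ ω, 0 ≤ μ ω) (h : HasCommonBit μ α β) : ¬Indep μ α β := by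
  intro hind
  obtain ⟨E, hα, hβ, ⟨u, hu, hEu⟩, v, hv, hEv⟩ := h
  obtain ⟨ω, hω, hαω, hβω⟩ := exists_pos_of_indep hμ hind hu hv
  exact hEv ((hβ hω hv hβω).1 ((hα hω hu hαω).2 hEu))

lemma of_condMutualInfo_eq_zero {D : Type} (hμ : ∀ ω, 0 ≤ μ ω) (h : HasCommonBit μ α β)
    {γ : Ω → C} {δ : Ω → D} (hγ : condMutualInfo μ α β γ = 0)
    (hδ : condMutualInfo μ α β δ = 0) : HasCommonBit μ γ δ := by
  obtain ⟨E, hα, hβ, hE⟩ := h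
  exact ⟨E, hα.of_condMutualInfo_eq_zero hμ hβ hγ, hα.of_condMutualInfo_eq_zero hμ hβ hδ, hE⟩

lemma of_pr_eq {Ω' : Type} [Fintype Ω'] {μ' : Ω' → ℝ} {α' : Ω' → A} {β' : Ω' → B}
    (hμ : ∀ ω, 0 ≤ μ ω) (hμ' : ∀ x, 0 ≤ μ' x) (h : HasCommonBit μ α β)
    (hpr : ∀ a b, pr μ' (fun x => α' x = a ∧ β' x = b) = pr μ (fun ω => α ω = a ∧ β ω = b)) :
    HasCommonBit μ' α' β' := by
  have hsupp : ∀ a b,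
      (∃ x, 0 < μ' x ∧ α' x = a ∧ β' x = b) ↔ ∃ ω, 0 < μ ω ∧ α ω = a ∧ β ω = b := by
    intro a b
    rw [← pr_ne_zero_iff hμ', hpr, pr_ne_zero_iff hμ]
  obtain ⟨E, hα, hβ, ⟨u, hu, hEu⟩, v, hv, hEv⟩ := h
  let E' : Ω' → Prop := fun x => ∃ ω, 0 < μ ω ∧ α ω = α' x ∧ β ω = β' x ∧ E ω
  have hE' : ∀ {x ω}, 0 < μ ω → α ω = α' x → β ω = β' x → (E' x ↔ E ω) := by
    refine fun hω hωα hωβ => ⟨?_, fun hE => ⟨_, hω, hωα, hωβ, hE⟩⟩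
    rintro ⟨ω', hω', hω'α, -, hE⟩
    exact (hα hω' hω (hω'α.trans hωα.symm)).1 hE
  have hlift : ∀ {x}, 0 < μ' x → ∃ ω, 0 < μ ω ∧ α ω = α' x ∧ β ω = β' x ∧ (E' x ↔ E ω) := by
    intro x hx
    obtain ⟨ω, hω, hωα, hωβ⟩ := (hsupp _ _).1 ⟨x, hx, rfl, rfl⟩
    exact ⟨ω, hω, hωα, hωβ, hE' hω hωα hωβ⟩
  refine ⟨E', fun x y hx hy hxy => ?_, fun x y hx hy hxy => ?_, ?_, ?_⟩
  · obtain ⟨ω, hω, hωα, -, hxω⟩ := hlift hx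
    obtain ⟨ω', hω', hω'α, -, hyω'⟩ := hlift hy
    rw [hxω, hyω']
    exact hα hω hω' (by rw [hωα, hω'α, hxy])
  · obtain ⟨ω, hω, -, hωβ, hxω⟩ := hlift hx
    obtain ⟨ω', hω', -, hω'β, hyω'⟩ := hlift hy
    rw [hxω, hyω']
    exact hβ hω hω' (by rw [hωβ, hω'β, hxy])
  · obtain ⟨x, hx, hxα, hxβ⟩ := (hsupp _ _).2 ⟨u, hu, rfl, rfl⟩
    exact ⟨x, hx, (hE' hu hxα.symm hxβ.symm).2 hEu⟩
  · obtain ⟨x, hx, hxα, hxβ⟩ := (hsupp _ _).2 ⟨v, hv, rfl, rfl⟩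
    exact ⟨x, hx, mt (hE' hv hxα.symm hxβ.symm).1 hEv⟩

theorem not_condIndepOrder (hμ : ∀ ω, 0 ≤ μ ω) (h : HasCommonBit μ α β) (k : ℕ) :
    ¬CondIndepOrder μ α β k := by
  induction k generalizing Ω A B with
  | zero => exact h.not_indep hμ
  | succ k ih =>
    rintro ⟨Ω', A', B', _, μ', α₀, β₀, αs, βs, hμ', hpr, hαs, hβs, hk⟩
    have h₀ : HasCommonBit μ' α₀ β₀ := h.of_pr_eq hμ hμ'.1 hpr
    exact ih hμ'.1 (h₀.of_condMutualInfo_eq_zero hμ'.1 hαs hβs) hk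

end HasCommonBit

theorem not_condIndepOrder_of_isBlockMatrix_general (hμ : IsProb μ) {I : Set A} {J : Set B}
    (h₁ : ∃ a ∈ I, ∃ b ∈ J, pr μ (fun ω => α ω = a ∧ β ω = b) ≠ 0)
    (h₂ : ∃ a ∈ Iᶜ, ∃ b ∈ Jᶜ, pr μ (fun ω => α ω = a ∧ β ω = b) ≠ 0)
    (hoff : ∀ a b, (a ∈ I ∧ b ∈ Jᶜ) ∨ (a ∈ Iᶜ ∧ b ∈ J) →
      pr μ (fun ω => α ω = a ∧ β ω = b) = 0) (k : ℕ) :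
    ¬CondIndepOrder μ α β k := by
  have hmem : ∀ {ω}, 0 < μ ω → (α ω ∈ I ↔ β ω ∈ J) := by
    intro ω hω
    have hblock := mt (hoff (α ω) (β ω)) ((pr_ne_zero_iff hμ.1).2 ⟨ω, hω, rfl, rfl⟩)
    simp only [Set.mem_compl_iff] at hblock
    tauto
  have hα : Determines μ α fun ω => α ω ∈ I := fun u v _ _ huv => by simp only [huv]
  have hβ : Determines μ β fun ω => α ω ∈ I := fun u v hu hv huv => by
    simp only [hmem hu, hmem hv, huv]
  simp only [pr_ne_zero_iff hμ.1] at h₁ h₂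
  obtain ⟨_, hu, _, -, u, hμu, rfl, -⟩ := h₁
  obtain ⟨_, hv, _, -, v, hμv, rfl, -⟩ := h₂
  have hbit : HasCommonBit μ α β := ⟨_, hα, hβ, ⟨u, hμu, hu⟩, v, hμv, hv⟩
  exact hbit.not_condIndepOrder hμ.1 k

end CommonBit

/-- If the joint probability matrix of `(α, β)` is a block matrix, then
`α` and `β` are not conditionally independent of any order `k`. -/
theorem not_condIndepOrder_of_isBlockMatrix {Ω : Type} [Fintype Ω] {m n : ℕ}
    (μ : Ω → ℝ) (hμ : IsProb μ) (α : Ω → Fin m) (β : Ω → Fin n)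
    (M : Matrix (Fin m) (Fin n) ℝ) (hM : IsJointMatrixOf M μ α β)
    (hblock : IsBlockMatrix M) :
    ∀ k : ℕ, ¬ CondIndepOrder μ α β k := by
  obtain ⟨I, J, -, -, -, -, h₁, h₂, hoff⟩ := hblock
  simp only [hM _ _, ← Finset.mem_coe, Finset.coe_compl] at h₁ h₂ hoff
  exact not_condIndepOrder_of_isBlockMatrix_general hμ h₁ h₂ hoff
end

section
/- Let α₁ and β₁ be random variables on a finite probability space Ω₁ that are conditionally independent of order k₁, and let α₂ and β₂ be random variables on a finite probability space Ω₂ that are conditionally independent of order k₂. On the product probability space Ω₁ × Ω₂ (with the product measure), the random variables (α₁, α₂) and (β₁, β₂) are conditionally independent of order max(k₁, k₂). -/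
open scoped BigOperators Classical

/-!
Entropy is additive over independent pairs, hence so is conditional mutual information: witnesses
for the order of `(α₁, β₁)` and of `(α₂, β₂)` can be multiplied coordinatewise, and the product of
two pairs of the *same* order `k` has order `k` by induction on `k`. To bring both pairs to the
order `max k₁ k₂`, note that the order can always be raised by one by taking `α* = α` and `β* = β`,
since `I(α : β | α) = I(α : β | β) = 0`.
-/

section Entropy

variable {Ω A A' B C : Type} [Fintype Ω] {μ : Ω → ℝ}

theorem pr_pos {E : Ω → Prop} (hμ : ∀ ω, 0 ≤ μ ω) {ω : Ω} (hE : E ω) (hω : 0 < μ ω) :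
    0 < pr μ E :=
  Finset.sum_pos' (fun ω' _ => ite_nonneg (hμ ω') le_rfl) ⟨ω, Finset.mem_univ ω, by rwa [if_pos hE]⟩

variable (μ)

theorem pr_eq_sum_filter (E : Ω → Prop) : pr μ E = ∑ ω with E ω, μ ω :=
  (Finset.sum_filter E μ).symm

theorem ent_eq_neg_sum_mul_logb (α : Ω → A) :
    ent μ α = -∑ ω, μ ω * Real.logb 2 (pr μ fun ω' => α ω' = α ω) := by
  refine congrArg Neg.neg (Finset.sum_image' _ fun ω _ => ?_)
  have logb_const_on_fiber : ∀ ω' ∈ Finset.univ.filter (fun ω' => α ω' = α ω),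
      μ ω' * Real.logb 2 (pr μ fun x => α x = α ω') =
        μ ω' * Real.logb 2 (pr μ fun x => α x = α ω) := fun ω' hω' => by
    rw [(Finset.mem_filter.mp hω').2]
  rw [Finset.sum_congr rfl logb_const_on_fiber, ← Finset.sum_mul, ← pr_eq_sum_filter]

theorem ent_comp_of_injective {f : A → A'} (hf : f.Injective) (α : Ω → A) :
    ent μ (f ∘ α) = ent μ α := by
  simp only [ent_eq_neg_sum_mul_logb, Function.comp_apply, hf.eq_iff]

theorem condEnt_comp_of_injective {f : A → A'} (hf : f.Injective) (α : Ω → A) (γ : Ω → C) :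
    condEnt μ (f ∘ α) γ = condEnt μ α γ :=
  congrArg (· - ent μ γ)
    (ent_comp_of_injective μ (hf.prodMap Function.injective_id) fun ω => (α ω, γ ω))

theorem condEnt_comp_self (f : C → A) (γ : Ω → C) : condEnt μ (f ∘ γ) γ = 0 := by
  have hf : Function.Injective fun c => (f c, c) := fun _ _ h => congrArg Prod.snd h
  exact sub_eq_zero.mpr (ent_comp_of_injective μ hf γ)

theorem condEnt_comp_prodMk (f : C → A) (β : Ω → B) (γ : Ω → C) :
    condEnt μ (fun ω => (f (γ ω), β ω)) γ = condEnt μ β γ := by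
  have hf : Function.Injective fun p : B × C => ((f p.2, p.1), p.2) := fun _ _ h =>
    Prod.ext (congrArg (·.1.2) h) (congrArg (·.2) h)
  exact congrArg (· - ent μ γ) (ent_comp_of_injective μ hf fun ω => (β ω, γ ω))

theorem condMutualInfo_comm (α : Ω → A) (β : Ω → B) (γ : Ω → C) :
    condMutualInfo μ α β γ = condMutualInfo μ β α γ := by
  have pair_swap : condEnt μ (fun ω => (α ω, β ω)) γ = condEnt μ (fun ω => (β ω, α ω)) γ :=
    condEnt_comp_of_injective μ Prod.swap_injective (fun ω => (β ω, α ω)) γ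
  rw [condMutualInfo, condMutualInfo, pair_swap, add_comm (condEnt μ α γ)]

theorem condMutualInfo_comp_left (f : C → A) (β : Ω → B) (γ : Ω → C) :
    condMutualInfo μ (f ∘ γ) β γ = 0 := by
  simp only [condMutualInfo, condEnt_comp_self, Function.comp_apply, condEnt_comp_prodMk, zero_add,
    sub_self]

theorem condMutualInfo_comp_right (α : Ω → A) (f : C → B) (γ : Ω → C) :
    condMutualInfo μ α (f ∘ γ) γ = 0 := by
  rw [condMutualInfo_comm, condMutualInfo_comp_left]

end Entropy

section Monotonicity

variable {Ω A B : Type} [Fintype Ω] {μ : Ω → ℝ} {α : Ω → A} {β : Ω → B} {k l : ℕ}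

theorem CondIndepOrder.succ (hμ : IsProb μ) (h : CondIndepOrder μ α β k) :
    CondIndepOrder μ α β (k + 1) :=
  ⟨Ω, A, B, inferInstance, μ, α, β, α, β, hμ, fun _ _ => rfl,
    condMutualInfo_comp_left μ id β α, condMutualInfo_comp_right μ α id β, h⟩

theorem CondIndepOrder.mono (hμ : IsProb μ) (hkl : k ≤ l) (h : CondIndepOrder μ α β k) :
    CondIndepOrder μ α β l :=
  Nat.le_induction h (fun _ _ ih => ih.succ hμ) l hkl

end Monotonicity

/-- The product of two distributions, making the coordinates of `Ω₁ × Ω₂` independent. Random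
variables on the factors are combined by `Prod.map`, which is `fun ω => (α₁ ω.1, α₂ ω.2)`. -/
noncomputable def prodDist {Ω₁ Ω₂ : Type} (μ₁ : Ω₁ → ℝ) (μ₂ : Ω₂ → ℝ) : Ω₁ × Ω₂ → ℝ :=
  fun ω => μ₁ ω.1 * μ₂ ω.2

section Product

variable {Ω₁ Ω₂ A₁ A₂ B₁ B₂ C₁ C₂ : Type} [Fintype Ω₁] [Fintype Ω₂]
  {μ₁ : Ω₁ → ℝ} {μ₂ : Ω₂ → ℝ}

theorem IsProb.prod (hμ₁ : IsProb μ₁) (hμ₂ : IsProb μ₂) : IsProb (prodDist μ₁ μ₂) :=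
  ⟨fun ω => mul_nonneg (hμ₁.1 ω.1) (hμ₂.1 ω.2), by
    simp only [prodDist, Fintype.sum_prod_type, ← Finset.sum_mul_sum, hμ₁.2, hμ₂.2, one_mul]⟩

theorem pr_prodDist (μ₁ : Ω₁ → ℝ) (μ₂ : Ω₂ → ℝ) (E₁ : Ω₁ → Prop) (E₂ : Ω₂ → Prop) :
    pr (prodDist μ₁ μ₂) (fun ω => E₁ ω.1 ∧ E₂ ω.2) = pr μ₁ E₁ * pr μ₂ E₂ := by
  simp only [pr, prodDist, Finset.sum_mul_sum, Fintype.sum_prod_type, ite_zero_mul_ite_zero]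

theorem pr_prodDist_map_eq (μ₁ : Ω₁ → ℝ) (μ₂ : Ω₂ → ℝ) (α₁ : Ω₁ → A₁) (α₂ : Ω₂ → A₂)
    (a : A₁ × A₂) :
    pr (prodDist μ₁ μ₂) (fun ω => Prod.map α₁ α₂ ω = a) =
      pr μ₁ (fun ω => α₁ ω = a.1) * pr μ₂ (fun ω => α₂ ω = a.2) := by
  simp only [← pr_prodDist, Prod.ext_iff, Prod.map_fst, Prod.map_snd]

theorem pr_prodDist_map_eq_and_map_eq (μ₁ : Ω₁ → ℝ) (μ₂ : Ω₂ → ℝ) (α₁ : Ω₁ → A₁) (α₂ : Ω₂ → A₂)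
    (β₁ : Ω₁ → B₁) (β₂ : Ω₂ → B₂) (a : A₁ × A₂) (b : B₁ × B₂) :
    pr (prodDist μ₁ μ₂) (fun ω => Prod.map α₁ α₂ ω = a ∧ Prod.map β₁ β₂ ω = b) =
      pr μ₁ (fun ω => α₁ ω = a.1 ∧ β₁ ω = b.1) * pr μ₂ (fun ω => α₂ ω = a.2 ∧ β₂ ω = b.2) := by
  simp only [← pr_prodDist, Prod.ext_iff, Prod.map_fst, Prod.map_snd, and_and_and_comm]

theorem ent_prodDist (hμ₁ : IsProb μ₁) (hμ₂ : IsProb μ₂) (α₁ : Ω₁ → A₁) (α₂ : Ω₂ → A₂) :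
    ent (prodDist μ₁ μ₂) (Prod.map α₁ α₂) = ent μ₁ α₁ + ent μ₂ α₂ := by
  let p₁ (x : Ω₁) : ℝ := pr μ₁ fun x' => α₁ x' = α₁ x
  let p₂ (y : Ω₂) : ℝ := pr μ₂ fun y' => α₂ y' = α₂ y
  have mul_logb_mul (x : Ω₁) (y : Ω₂) : μ₁ x * μ₂ y * Real.logb 2 (p₁ x * p₂ y) =
      μ₁ x * Real.logb 2 (p₁ x) * μ₂ y + μ₁ x * (μ₂ y * Real.logb 2 (p₂ y)) := by
    rcases (hμ₁.1 x).eq_or_lt with hx | hx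
    · simp [← hx]
    rcases (hμ₂.1 y).eq_or_lt with hy | hy
    · simp [← hy]
    have hp₁ : 0 < p₁ x := pr_pos hμ₁.1 rfl hx
    have hp₂ : 0 < p₂ y := pr_pos hμ₂.1 rfl hy
    rw [Real.logb_mul hp₁.ne' hp₂.ne']
    ring
  calc ent (prodDist μ₁ μ₂) (Prod.map α₁ α₂)
    _ = -∑ x, ∑ y, μ₁ x * μ₂ y * Real.logb 2 (p₁ x * p₂ y) := by
      simp only [ent_eq_neg_sum_mul_logb, pr_prodDist_map_eq, Fintype.sum_prod_type, prodDist,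
        Prod.map_fst, Prod.map_snd, p₁, p₂]
    _ = -((∑ x, μ₁ x * Real.logb 2 (p₁ x)) * ∑ y, μ₂ y +
          (∑ x, μ₁ x) * ∑ y, μ₂ y * Real.logb 2 (p₂ y)) := by
      simp only [mul_logb_mul, Finset.sum_add_distrib, Finset.sum_mul_sum]
    _ = ent μ₁ α₁ + ent μ₂ α₂ := by
      rw [hμ₁.2, hμ₂.2, mul_one, one_mul, neg_add, ent_eq_neg_sum_mul_logb,
        ent_eq_neg_sum_mul_logb]

theorem condEnt_prodDist (hμ₁ : IsProb μ₁) (hμ₂ : IsProb μ₂) (α₁ : Ω₁ → A₁) (α₂ : Ω₂ → A₂)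
    (γ₁ : Ω₁ → C₁) (γ₂ : Ω₂ → C₂) :
    condEnt (prodDist μ₁ μ₂) (Prod.map α₁ α₂) (Prod.map γ₁ γ₂) =
      condEnt μ₁ α₁ γ₁ + condEnt μ₂ α₂ γ₂ := by
  have ent_pair : ent (prodDist μ₁ μ₂) (fun ω => (Prod.map α₁ α₂ ω, Prod.map γ₁ γ₂ ω)) =
      ent μ₁ (fun x => (α₁ x, γ₁ x)) + ent μ₂ (fun y => (α₂ y, γ₂ y)) := by
    rw [← ent_prodDist hμ₁ hμ₂]
    exact ent_comp_of_injective (prodDist μ₁ μ₂) (Equiv.prodProdProdComm A₁ C₁ A₂ C₂).injective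
      (Prod.map (fun x => (α₁ x, γ₁ x)) fun y => (α₂ y, γ₂ y))
  rw [condEnt, condEnt, condEnt, ent_pair, ent_prodDist hμ₁ hμ₂]
  ring

theorem condMutualInfo_prodDist (hμ₁ : IsProb μ₁) (hμ₂ : IsProb μ₂) (α₁ : Ω₁ → A₁) (α₂ : Ω₂ → A₂)
    (β₁ : Ω₁ → B₁) (β₂ : Ω₂ → B₂) (γ₁ : Ω₁ → C₁) (γ₂ : Ω₂ → C₂) :
    condMutualInfo (prodDist μ₁ μ₂) (Prod.map α₁ α₂) (Prod.map β₁ β₂) (Prod.map γ₁ γ₂) =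
      condMutualInfo μ₁ α₁ β₁ γ₁ + condMutualInfo μ₂ α₂ β₂ γ₂ := by
  have condEnt_pair :
      condEnt (prodDist μ₁ μ₂) (fun ω => (Prod.map α₁ α₂ ω, Prod.map β₁ β₂ ω)) (Prod.map γ₁ γ₂) =
        condEnt μ₁ (fun x => (α₁ x, β₁ x)) γ₁ + condEnt μ₂ (fun y => (α₂ y, β₂ y)) γ₂ := by
    rw [← condEnt_prodDist hμ₁ hμ₂]
    exact condEnt_comp_of_injective (prodDist μ₁ μ₂) (Equiv.prodProdProdComm A₁ B₁ A₂ B₂).injective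
      (Prod.map (fun x => (α₁ x, β₁ x)) fun y => (α₂ y, β₂ y)) (Prod.map γ₁ γ₂)
  rw [condMutualInfo, condMutualInfo, condMutualInfo, condEnt_pair, condEnt_prodDist hμ₁ hμ₂,
    condEnt_prodDist hμ₁ hμ₂]
  ring

theorem Indep.prodMap {α₁ : Ω₁ → A₁} {α₂ : Ω₂ → A₂} {β₁ : Ω₁ → B₁} {β₂ : Ω₂ → B₂}
    (h₁ : Indep μ₁ α₁ β₁) (h₂ : Indep μ₂ α₂ β₂) :
    Indep (prodDist μ₁ μ₂) (Prod.map α₁ α₂) (Prod.map β₁ β₂) := fun a b => by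
  rw [pr_prodDist_map_eq_and_map_eq, pr_prodDist_map_eq, pr_prodDist_map_eq, h₁, h₂,
    mul_mul_mul_comm]

theorem CondIndepOrder.prodMap {α₁ : Ω₁ → A₁} {α₂ : Ω₂ → A₂} {β₁ : Ω₁ → B₁} {β₂ : Ω₂ → B₂} {k : ℕ}
    (h₁ : CondIndepOrder μ₁ α₁ β₁ k) (h₂ : CondIndepOrder μ₂ α₂ β₂ k) :
    CondIndepOrder (prodDist μ₁ μ₂) (Prod.map α₁ α₂) (Prod.map β₁ β₂) k := by
  induction k generalizing Ω₁ Ω₂ A₁ A₂ B₁ B₂ with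
  | zero => exact Indep.prodMap h₁ h₂
  | succ k ih =>
    obtain ⟨Ω₁', A₁', B₁', _, ν₁, α₁', β₁', αs₁, βs₁, hν₁, law₁, hαs₁, hβs₁, order₁⟩ := h₁
    obtain ⟨Ω₂', A₂', B₂', _, ν₂, α₂', β₂', αs₂, βs₂, hν₂, law₂, hαs₂, hβs₂, order₂⟩ := h₂
    refine ⟨Ω₁' × Ω₂', A₁' × A₂', B₁' × B₂', inferInstance, prodDist ν₁ ν₂,
      Prod.map α₁' α₂', Prod.map β₁' β₂', Prod.map αs₁ αs₂, Prod.map βs₁ βs₂,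
      hν₁.prod hν₂, fun a b => ?_, ?_, ?_, ih order₁ order₂⟩
    · rw [pr_prodDist_map_eq_and_map_eq, pr_prodDist_map_eq_and_map_eq, law₁, law₂]
    · rw [condMutualInfo_prodDist hν₁ hν₂, hαs₁, hαs₂, add_zero]
    · rw [condMutualInfo_prodDist hν₁ hν₂, hβs₁, hβs₂, add_zero]

end Product

/-- If `α₁, β₁` on `Ω₁` are conditionally independent of order `k₁` and
`α₂, β₂` on `Ω₂` are conditionally independent of order `k₂`, then on `Ω₁ × Ω₂`
(with the product measure) the pairs `(α₁, α₂)` and `(β₁, β₂)` are conditionally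
independent of order `max k₁ k₂`. -/
theorem condIndepOrder_prod {Ω₁ Ω₂ A₁ B₁ A₂ B₂ : Type} [Fintype Ω₁] [Fintype Ω₂]
    (μ₁ : Ω₁ → ℝ) (hμ₁ : IsProb μ₁) (μ₂ : Ω₂ → ℝ) (hμ₂ : IsProb μ₂)
    (α₁ : Ω₁ → A₁) (β₁ : Ω₁ → B₁) (α₂ : Ω₂ → A₂) (β₂ : Ω₂ → B₂) (k₁ k₂ : ℕ)
    (h₁ : CondIndepOrder μ₁ α₁ β₁ k₁) (h₂ : CondIndepOrder μ₂ α₂ β₂ k₂) :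
    CondIndepOrder (fun ω : Ω₁ × Ω₂ => μ₁ ω.1 * μ₂ ω.2)
      (fun ω => (α₁ ω.1, α₂ ω.2)) (fun ω => (β₁ ω.1, β₂ ω.2)) (max k₁ k₂) := by
  exact (h₁.mono hμ₁ (le_max_left k₁ k₂)).prodMap (h₂.mono hμ₂ (le_max_right k₁ k₂))
end
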